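/- Over the alphabet Σ = {a, b, c}, the intersection of the iterated n-ary literal shuffle of the singleton language {abc} with a*b*c* is exactly {aᵐbᵐcᵐ : m ≥ 0}: (abc)^{⧢₂,*} ∩ a*b*c* = { aᵐbᵐcᵐ : m ≥ 0 }. -/

import Mathlib

/-!
Reading the columns of the array of padded words only permutes its letters. Hence every word in
`⧢₂ⁿ(abc, …, abc)` contains each of `a`, `b`, `c` exactly `n` times, and such a word of the form
`aᵖbᵠcʳ` must have `p = q = r = n`. Conversely, for `m ≥ 1`, the interleaving of `m` copies of
`abc`, all padded on the right only, has the columns `aᵐ`, `bᵐ`, `cᵐ`, followed by columns of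
dollars, so that erasing the dollars gives `aᵐbᵐcᵐ`.

Both facts about `List.transpose` (`interleave_perm` and `interleave_replicate`) come from a
structurally recursive description `zipCons` of the step that adds one row to the array.
-/

/-!
Common definitions.

Words over an alphabet `β` are modelled as `List β`.  The alphabet
`Σ ∪ {$}` is modelled as `Option β`, where `none` plays the role of the
dollar sign `$` and `some x` the role of a letter `x ∈ Σ`.  The erasing
homomorphism `h` (with `h($) = ε`, `h(x) = x`) is `List.reduceOption`.
-/

/-- Perfect interleaving `I(v₁, …, vₙ)` of equal-length words, read column-wise. -/
def interleave {β : Type*} (vs : List (List β)) : List β :=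
  vs.transpose.flatten

/-- `$^k u $^r`, the two-sided dollar padding of the word `u`. -/
def dollarPad {β : Type*} (k : ℕ) (u : List β) (r : ℕ) : List (Option β) :=
  List.replicate k none ++ u.map some ++ List.replicate r none

/-- The `n`-ary initial literal shuffle `⧢₁ⁿ(u₁, …, uₙ)`:
pad each word with a fresh symbol (`none`) to the maximal length `N`,
interleave, and erase the fresh symbols. -/
def shuffle1 {β : Type*} {n : ℕ} (us : Fin n → List β) : List β :=
  (interleave (List.ofFn fun i =>
    (us i).map some ++
      List.replicate ((Finset.univ.sup fun j => (us j).length) - (us i).length)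
        (none : Option β))).reduceOption

/-- The `n`-ary literal shuffle `⧢₂ⁿ(u₁, …, uₙ)`:
all erased interleavings of paddings `$^k uᵢ $^{r-k}` with `r = n·N - |uᵢ|`. -/
def shuffle2 {β : Type*} {n : ℕ} (us : Fin n → List β) : Set (List β) :=
  { w | ∃ k : Fin n → ℕ,
      (∀ i, k i ≤ n * (Finset.univ.sup fun j => (us j).length) - (us i).length) ∧
      w = (interleave (List.ofFn fun i =>
        dollarPad (k i) (us i)
          (n * (Finset.univ.sup fun j => (us j).length) - (us i).length - k i))).reduceOption }

/-- Extension of `⧢₁ⁿ` to languages. -/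
def shuffle1L {β : Type*} {n : ℕ} (Ls : Fin n → Set (List β)) : Set (List β) :=
  { w | ∃ us : Fin n → List β, (∀ i, us i ∈ Ls i) ∧ w = shuffle1 us }

/-- Extension of `⧢₂ⁿ` to languages. -/
def shuffle2L {β : Type*} {n : ℕ} (Ls : Fin n → Set (List β)) : Set (List β) :=
  { w | ∃ us : Fin n → List β, (∀ i, us i ∈ Ls i) ∧ w ∈ shuffle2 us }

/-- Iterated version `L^{⧢₁,*} = {ε} ∪ ⋃_{n ≥ 1} ⧢₁ⁿ(L, …, L)`. -/
def itShuffle1 {β : Type*} (L : Set (List β)) : Set (List β) :=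
  {([] : List β)} ∪ ⋃ (n : ℕ) (_ : 1 ≤ n), shuffle1L (fun _ : Fin n => L)

/-- Iterated version `L^{⧢₂,*} = {ε} ∪ ⋃_{n ≥ 1} ⧢₂ⁿ(L, …, L)`. -/
def itShuffle2 {β : Type*} (L : Set (List β)) : Set (List β) :=
  {([] : List β)} ∪ ⋃ (n : ℕ) (_ : 1 ≤ n), shuffle2L (fun _ : Fin n => L)

/-- `IsShuffle u v w` : `w` is an interleaving of `u` and `v`
(ordinary shuffle of words). -/
inductive IsShuffle {β : Type*} : List β → List β → List β → Prop
  | nil : IsShuffle [] [] []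
  | left {a : β} {u v w : List β} : IsShuffle u v w → IsShuffle (a :: u) v (a :: w)
  | right {a : β} {u v w : List β} : IsShuffle u v w → IsShuffle u (a :: v) (a :: w)

/-- Ordinary shuffle of languages `U ⧢ V`. -/
def shuffleL {β : Type*} (U V : Set (List β)) : Set (List β) :=
  { w | ∃ u ∈ U, ∃ v ∈ V, IsShuffle u v w }

/-- `n`-fold ordinary shuffle `L₁ ⧢ ⋯ ⧢ Lₙ` (iterated binary shuffle;
`{ε}` is the neutral element). -/
def shuffleN {β : Type*} {n : ℕ} (Ls : Fin n → Set (List β)) : Set (List β) :=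
  (List.ofFn Ls).foldr shuffleL {([] : List β)}

/-- Iterated ordinary shuffle closure `L^{⧢,*}`. -/
def itShuffleO {β : Type*} (L : Set (List β)) : Set (List β) :=
  {([] : List β)} ∪ ⋃ (n : ℕ) (_ : 1 ≤ n), shuffleN (fun _ : Fin n => L)

/-- Bérard's binary initial literal shuffle of languages. -/
def berardShuffle1 {β : Type*} (U V : Set (List β)) : Set (List β) :=
  { w | (∃ x y v, x ++ y ∈ U ∧ v ∈ V ∧ x.length = v.length ∧ w = interleave [x, v] ++ y) ∨
        (∃ u x y, u ∈ U ∧ x ++ y ∈ V ∧ x.length = u.length ∧ w = interleave [u, x] ++ y) }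

/-- A three-letter alphabet `Σ = {a, b, c}`. -/
inductive ABC : Type
  | a | b | c
deriving DecidableEq

/-- Puts the letters of the row `l` in front of the successive columns `acc`, opening a new
column whenever `l` is longer than the list of columns. -/
def zipCons {β : Type*} : List β → List (List β) → List (List β)
  | [], acc => acc
  | x :: l, [] => [x] :: zipCons l []
  | x :: l, s :: acc => (x :: s) :: zipCons l acc

lemma zipCons_nil {β : Type*} (l : List β) : zipCons l [] = l.map fun x => [x] := by
  induction l with
  | nil => rfl
  | cons x l ih => simp [zipCons, ih]

lemma foldl_push_toList {β : Type*} (l : List β) (acc : Array (List β)) :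
    (l.foldl (fun arr x => arr.push [x]) acc).toList = acc.toList ++ l.map fun x => [x] := by
  induction l generalizing acc with
  | nil => simp
  | cons x l ih => simp

/-- The stateful pass over the existing columns, followed by the columns opened by the letters
that are left over. -/
lemma mapM_pop_zipCons {β : Type*} (L : List (List β)) (l : List β) :
    (L.mapM (m := StateM (List β)) List.transpose.pop l).1 ++
      (L.mapM (m := StateM (List β)) List.transpose.pop l).2.map (fun x => [x]) = zipCons l L := by
  induction L generalizing l with
  | nil => exact (zipCons_nil l).symm
  | cons s L ih =>
    rw [List.mapM_cons]
    cases l with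
    | nil =>
      have h := ih []
      simp only [zipCons] at h
      exact congrArg (s :: ·) h
    | cons x l => exact congrArg ((x :: s) :: ·) (ih l)

lemma go_toList {β : Type*} (l : List β) (acc : Array (List β)) :
    (List.transpose.go l acc).toList = zipCons l acc.toList := by
  have h := congrFun (Array.toList_mapM (m := StateM (List β)) (xs := acc) (f := List.transpose.pop)) l
  rw [← mapM_pop_zipCons, ← h]
  exact foldl_push_toList _ _

lemma transpose_eq {β : Type*} (vs : List (List β)) :
    vs.transpose = vs.foldr zipCons [] := by
  unfold List.transpose
  induction vs with
  | nil => rfl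
  | cons v vs ih => rw [List.foldr_cons, List.foldr_cons, go_toList, ih]

lemma zipCons_flatten_perm {β : Type*} (l : List β) (acc : List (List β)) :
    (zipCons l acc).flatten.Perm (l ++ acc.flatten) := by
  induction l generalizing acc with
  | nil => exact List.Perm.refl _
  | cons x l ih =>
    cases acc with
    | nil => simpa [zipCons] using ih []
    | cons s acc =>
      simp only [zipCons, List.flatten_cons, List.cons_append, List.perm_cons]
      refine ((ih acc).append_left s).trans ?_
      rw [← List.append_assoc, ← List.append_assoc]
      exact List.perm_append_comm.append_right _

/-- Interleaving permutes the letters of the concatenation. -/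
lemma interleave_perm {β : Type*} (vs : List (List β)) :
    (interleave vs).Perm vs.flatten := by
  unfold interleave
  rw [transpose_eq]
  induction vs with
  | nil => exact List.Perm.refl _
  | cons v vs ih =>
    rw [List.foldr_cons, List.flatten_cons]
    exact (zipCons_flatten_perm _ _).trans (ih.append_left v)

lemma zipCons_map_replicate {β : Type*} (l : List β) (n : ℕ) :
    zipCons l (l.map (List.replicate n)) = l.map (List.replicate (n + 1)) := by
  induction l with
  | nil => rfl
  | cons x l ih => simp [zipCons, ih, List.replicate_succ]

/-- For `n = 0` copies this would fail: the transpose of `[]` is `[]`, not a list of empty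
columns. -/
lemma interleave_replicate {β : Type*} (l : List β) (n : ℕ) :
    interleave (List.replicate (n + 1) l) = (l.map (List.replicate (n + 1))).flatten := by
  unfold interleave
  rw [transpose_eq]
  congr 1
  induction n with
  | zero => exact zipCons_nil l
  | succ n ih => rw [List.replicate_succ, List.foldr_cons, ih, zipCons_map_replicate]

/-- The erased interleaving of paddings is a permutation of the unpadded concatenation. -/
lemma reduceOption_interleave_perm {β : Type*} {n : ℕ} (u : List β) (k r : Fin n → ℕ) :
    (interleave (List.ofFn fun i => dollarPad (k i) u (r i))).reduceOption.Perm
      (List.replicate n u).flatten := by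
  refine ((interleave_perm _).filterMap id).trans (List.Perm.of_eq ?_)
  change List.reduceOption _ = _
  induction n with
  | zero => rfl
  | succ n ih =>
    rw [List.ofFn_succ, List.flatten_cons, List.reduceOption_append, ih, List.replicate_succ,
      List.flatten_cons]
    congr 1
    simp [dollarPad, List.reduceOption]

lemma reduceOption_replicate_some {β : Type*} (n : ℕ) (x : β) :
    (List.replicate n (some x)).reduceOption = List.replicate n x := by
  simp [List.reduceOption]

lemma reduceOption_flatten_none {β : Type*} (n r : ℕ) :
    (List.replicate r (List.replicate n (none : Option β))).flatten.reduceOption = [] := by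
  rw [List.flatten_replicate_replicate, List.reduceOption_replicate_none]

open ABC in
/-- Over `Σ = {a,b,c}`:
`(abc)^{⧢₂,*} ∩ a*b*c* = { aᵐbᵐcᵐ : m ≥ 0 }`. -/
theorem stmt16 :
    itShuffle2 ({[a, b, c]} : Set (List ABC)) ∩
      { w | ∃ p q r : ℕ,
        w = List.replicate p a ++ List.replicate q b ++ List.replicate r c } =
      { w | ∃ m : ℕ, w = List.replicate m a ++ List.replicate m b ++ List.replicate m c } := by
  ext w
  constructor
  · rintro ⟨hw | hw, p, q, r, hpqr⟩
    · exact ⟨0, hw⟩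
    · simp only [Set.mem_iUnion] at hw
      obtain ⟨n, -, us, hus, k, -, hk⟩ := hw
      obtain rfl : us = fun _ => [a, b, c] := funext hus
      have hperm := reduceOption_interleave_perm [a, b, c] k
        (fun i => n * (Finset.univ.sup fun _ : Fin n => [a, b, c].length) -
          [a, b, c].length - k i)
      rw [← hk, hpqr] at hperm
      have ha := hperm.count_eq a
      have hb := hperm.count_eq b
      have hc := hperm.count_eq c
      simp [List.count_flatten, List.count_replicate] at ha hb hc
      subst ha hb hc
      exact ⟨_, hpqr⟩
  · rintro ⟨m, rfl⟩
    refine ⟨?_, m, m, m, rfl⟩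
    cases m with
    | zero => exact Or.inl rfl
    | succ m =>
      refine Or.inr ?_
      simp only [Set.mem_iUnion]
      refine ⟨m + 1, by omega, fun _ => [a, b, c], fun _ => rfl, fun _ => 0,
        fun _ => Nat.zero_le _, ?_⟩
      rw [List.ofFn_const, interleave_replicate]
      simp only [dollarPad, List.replicate_zero, List.nil_append, List.map_append, List.map_cons,
        List.map_nil, List.map_replicate, List.flatten_append, List.flatten_cons,
        List.flatten_nil, List.append_nil, List.reduceOption_append,
        reduceOption_replicate_some, reduceOption_flatten_none, List.append_assoc]
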